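/- Suppose λ₊ and λ₋ are real. Then for all 0 ≤ m, n ≤ p−1 the following pseudo-unitarity identity holds in A: (d_{0m})*·d_{0n} + Σ_{k=1}^{p−1} (d_{km})*·d_{p−k,n} = (δ_{m+n,0} + δ_{m+n,p})·1_A, where δ_{i,j} is the Kronecker delta. In particular (d_{00})*·d_{00} + Σ_{k=1}^{p−1} (d_{k0})*·d_{p−k,0} = 1_A. -/

import Mathlib

open scoped TensorProduct

noncomputable section

/-- `q = exp(2πi/p)`, a primitive `p`-th root of unity. -/
def q (p : ℕ) : ℂ := Complex.exp (2 * Real.pi * Complex.I / p)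

/-- `q^{1/2} = exp(iπ/p)`. -/
def qh (p : ℕ) : ℂ := Complex.exp (Real.pi * Complex.I / p)

/-- The balanced q-number `[k] = (q^k - q^{-k})/(q - q^{-1})`. -/
def qnum (p k : ℕ) : ℂ := (q p ^ k - (q p)⁻¹ ^ k) / (q p - (q p)⁻¹)

/-- The balanced q-factorial `[k]! = [1][2]⋯[k]`, with `[0]! = 1`. -/
def qfact (p k : ℕ) : ℂ := ∏ j ∈ Finset.range k, qnum p (j + 1)

/-- Generators `η₊, η₋, δ` of the coordinate algebra of `E(1,1|p)`. -/
inductive Gen : Type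
  | ep : Gen
  | em : Gen
  | d : Gen

open FreeAlgebra in
/-- The defining relations of `A(E(1,1|p))`: the two-sided ideal generated by
`η₋η₊ − q²η₊η₋`, `η₊δ − q²δη₊`, `η₋δ − q²δη₋`, `δ^p − 1`, `η₊^p`, `η₋^p`. -/
inductive ERel (p : ℕ) : FreeAlgebra ℂ Gen → FreeAlgebra ℂ Gen → Prop
  | commEta : ERel p (ι ℂ Gen.em * ι ℂ Gen.ep) ((q p ^ 2) • (ι ℂ Gen.ep * ι ℂ Gen.em))
  | commEpD : ERel p (ι ℂ Gen.ep * ι ℂ Gen.d) ((q p ^ 2) • (ι ℂ Gen.d * ι ℂ Gen.ep))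
  | commEmD : ERel p (ι ℂ Gen.em * ι ℂ Gen.d) ((q p ^ 2) • (ι ℂ Gen.d * ι ℂ Gen.em))
  | deltaPow : ERel p (ι ℂ Gen.d ^ p) 1
  | epPow : ERel p (ι ℂ Gen.ep ^ p) 0
  | emPow : ERel p (ι ℂ Gen.em ^ p) 0

/-- The coordinate algebra `A = A(E(1,1|p))` of the reduced quantum Poincaré group. -/
abbrev A (p : ℕ) : Type := RingQuot (ERel p)

/-- `η₊ ∈ A`. -/
def ηp (p : ℕ) : A p := RingQuot.mkAlgHom ℂ (ERel p) (FreeAlgebra.ι ℂ Gen.ep)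

/-- `η₋ ∈ A`. -/
def ηm (p : ℕ) : A p := RingQuot.mkAlgHom ℂ (ERel p) (FreeAlgebra.ι ℂ Gen.em)

/-- `δ ∈ A`. -/
def dl (p : ℕ) : A p := RingQuot.mkAlgHom ℂ (ERel p) (FreeAlgebra.ι ℂ Gen.d)

/-- `ξ = q·η₊η₋ ∈ A`. -/
def xi (p : ℕ) : A p := q p • (ηp p * ηm p)

/-- The matrix elements `d_{mn}(λ)` of the pseudo-unitary irreducible representation `T^λ`
of `E_q(1,1)` (with the central scalar factor `exp(−iλ₊^p z₊ − iλ₋^p z₋)` removed). -/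
def dmat (p : ℕ) (lp lm : ℂ) (m n : ℕ) : A p :=
  if m < n then
    (∑ k ∈ Finset.range (p - n + m),
        ((-(lp * lm)) ^ k * (q p)⁻¹ ^ (k * (m + n)) /
          (qfact p k * qfact p (k + n - m))) • xi p ^ k) *
      ((-Complex.I * qh p * (q p)⁻¹ ^ n * lm) • ηm p) ^ (n - m) * dl p ^ n +
    ((-Complex.I * (qh p)⁻¹ * (q p)⁻¹ ^ n * lp) • ηp p) ^ (p + m - n) * dl p ^ n *
      (∑ k ∈ Finset.range (n - m),
        ((-(lp * lm)) ^ k * q p ^ (k * (m + n)) /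
          (qfact p k * qfact p (k + p + m - n))) • xi p ^ k)
  else if n < m then
    (∑ k ∈ Finset.range (m - n),
        ((-(lp * lm)) ^ k * (q p)⁻¹ ^ (k * (m + n)) /
          (qfact p k * qfact p (k + p + n - m))) • xi p ^ k) *
      ((-Complex.I * qh p * (q p)⁻¹ ^ n * lm) • ηm p) ^ (p + n - m) * dl p ^ n +
    ((-Complex.I * (qh p)⁻¹ * (q p)⁻¹ ^ n * lp) • ηp p) ^ (m - n) * dl p ^ n *
      (∑ k ∈ Finset.range (p - m + n),
        ((-(lp * lm)) ^ k * q p ^ (k * (m + n)) /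
          (qfact p k * qfact p (k + m - n))) • xi p ^ k)
  else
    (∑ k ∈ Finset.range p,
        ((-(lp * lm)) ^ k * (q p)⁻¹ ^ (2 * k * n) / qfact p k ^ 2) • xi p ^ k) *
      dl p ^ n

/-!
The sums defining `d_{mn}` run over all `s` in `ℤ/p`: up to a power of `q`, the summands are
`η₊ ^ (m - s) * η₋ ^ (n - s) * δ ^ n` divided by `q`-factorials, with exponents reduced mod `p`.
The exponent of `q` splits as `-(m - s) s - (n - s) n`, so the matrix `(d_{mn})` factors as
`P * (J * M * J) * Δ`. Here `J` is the permutation matrix of `k ↦ -k`, `P` and `M` are the matrices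
of the truncated `q`- and `q⁻¹`-exponentials of the rescaled `η₊` and `η₋`, and `Δ` is the diagonal
matrix of the powers of `δ`.

The identity to be proved says that `u = (d_{mn})` satisfies `star u * J * u = J`, a property closed
under products. It is immediate for `J` and `Δ`. For the matrix of the `q`-exponential of `x` with
`star x = -q x`, the coefficient of `x ^ N` in the product is a `q`-binomial sum,
proportional to `∏ k < N, (y + q ^ (2 * k + 1) * z)` at `y = -q z`. Its first factor vanishes when
`N > 0`, while for `N ≥ p` already `x ^ N = 0`.
-/

open Finset.HasAntidiagonal (antidiagonal mem_antidiagonal)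

section QNumber

variable {K : Type*} [Field K] {v : K}

/-- The balanced `v`-number `[k] = (v ^ k - v⁻¹ ^ k) / (v - v⁻¹)` in an arbitrary field, so that
`qnum p` is the case `v = q p`; it is `0` for all `k` if `v = v⁻¹`. -/
def qNumber (v : K) (k : ℕ) : K := (v ^ k - v⁻¹ ^ k) / (v - v⁻¹)

/-- The `v`-factorial `[1][2]⋯[k]` built from `qNumber`, generalizing `qfact`. -/
def qFactorial (v : K) (k : ℕ) : K := ∏ j ∈ Finset.range k, qNumber v (j + 1)

lemma qFactorial_succ (v : K) (k : ℕ) :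
    qFactorial v (k + 1) = qFactorial v k * qNumber v (k + 1) :=
  Finset.prod_range_succ _ _

lemma qNumber_inv (v : K) (k : ℕ) : qNumber v⁻¹ k = qNumber v k := by
  rw [qNumber, qNumber, inv_inv, ← neg_sub (v ^ k), ← neg_sub v, neg_div_neg_eq]

lemma qFactorial_inv (v : K) (k : ℕ) : qFactorial v⁻¹ k = qFactorial v k :=
  Finset.prod_congr rfl fun _ _ => qNumber_inv v _

lemma star_qNumber [StarRing K] (v : K) (k : ℕ) : star (qNumber v k) = qNumber (star v) k := by
  simp [qNumber, star_inv₀]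

lemma star_qFactorial [StarRing K] (v : K) (k : ℕ) :
    star (qFactorial v k) = qFactorial (star v) k := by
  simp [qFactorial, star_qNumber]

lemma qNumber_add (v : K) (i j : ℕ) :
    qNumber v (i + j) = v⁻¹ ^ j * qNumber v i + v ^ i * qNumber v j := by
  simp only [qNumber, pow_add]
  ring

lemma pow_sub_inv_pow_ne_zero {p k : ℕ} (hv : IsPrimitiveRoot v p) (hp : Odd p) (hk : ¬p ∣ k) :
    v ^ k - v⁻¹ ^ k ≠ 0 := by
  intro h
  have hv₀ : v ≠ 0 := hv.ne_zero hp.pos.ne'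
  have hpow : v ^ (2 * k) = 1 := by
    rw [two_mul, pow_add]
    nth_rewrite 1 [sub_eq_zero.mp h]
    rw [← mul_pow, inv_mul_cancel₀ hv₀, one_pow]
  exact hk ((Nat.coprime_two_right.mpr hp).dvd_of_dvd_mul_left (hv.dvd_of_pow_eq_one _ hpow))

lemma qNumber_ne_zero {p k : ℕ} (hv : IsPrimitiveRoot v p) (hp : Odd p) (hk : ¬p ∣ k) :
    qNumber v k ≠ 0 := by
  have h1 : ¬p ∣ 1 := fun h => hk (h.trans (one_dvd k))
  exact div_ne_zero (pow_sub_inv_pow_ne_zero hv hp hk)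
    (by simpa using pow_sub_inv_pow_ne_zero hv hp h1)

lemma qFactorial_ne_zero {p k : ℕ} (hv : IsPrimitiveRoot v p) (hp : Odd p) (hk : k < p) :
    qFactorial v k ≠ 0 :=
  Finset.prod_ne_zero_iff.mpr fun j hj =>
    qNumber_ne_zero hv hp (Nat.not_dvd_of_pos_of_lt j.succ_pos
      ((Nat.succ_le_of_lt (Finset.mem_range.mp hj)).trans_lt hk))

lemma qNumber_div_qFactorial_succ {k : ℕ} (hk : qNumber v (k + 1) ≠ 0) :
    qNumber v (k + 1) / qFactorial v (k + 1) = 1 / qFactorial v k := by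
  rw [qFactorial_succ, div_mul_cancel_right₀ hk, one_div]

/-- The homogeneous polynomial in `y, z` expanded by the `q`-binomial theorem, divided by `[N]!`: in
this normalization its coefficients are products of the coefficients of two `q`-exponentials. -/
def qBinomialSum (v y z : K) (N : ℕ) : K :=
  ∑ a ∈ antidiagonal N,
    v ^ (a.2 * N) * y ^ a.1 * z ^ a.2 / (qFactorial v a.1 * qFactorial v a.2)

lemma qNumber_mul_qBinomialSum_succ (hv : v ≠ 0) (y z : K) {N : ℕ}
    (hN : ∀ k ≤ N, qNumber v (k + 1) ≠ 0) :
    qNumber v (N + 1) * qBinomialSum v y z (N + 1) =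
      (y + v ^ (2 * N + 1) * z) * qBinomialSum v y z N := by
  have hsplit : qNumber v (N + 1) * qBinomialSum v y z (N + 1) =
      ∑ a ∈ antidiagonal (N + 1), v ^ (a.2 * N) * y ^ a.1 * z ^ a.2 / qFactorial v a.2 *
          (qNumber v a.1 / qFactorial v a.1) +
        ∑ a ∈ antidiagonal (N + 1), v ^ (a.2 * N + (N + 1)) * y ^ a.1 * z ^ a.2 /
          qFactorial v a.1 * (qNumber v a.2 / qFactorial v a.2) := by
    rw [qBinomialSum, Finset.mul_sum, ← Finset.sum_add_distrib]
    refine Finset.sum_congr rfl fun a ha => ?_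
    have ha : a.1 + a.2 = N + 1 := mem_antidiagonal.mp ha
    have hinv : v ^ (a.2 * (N + 1)) * v⁻¹ ^ a.2 = v ^ (a.2 * N) := by
      rw [mul_add_one, pow_add, mul_assoc, ← mul_pow, mul_inv_cancel₀ hv, one_pow, mul_one]
    have hpow : v ^ (a.2 * (N + 1)) * v ^ a.1 = v ^ (a.2 * N + (N + 1)) := by
      rw [← pow_add, mul_add_one, add_assoc, add_comm a.2 a.1, ha]
    rw [← hinv, ← hpow, ← ha, qNumber_add]
    ring
  have hzero : qNumber v 0 = 0 := by simp [qNumber]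
  rw [hsplit, Finset.Nat.sum_antidiagonal_succ, Finset.Nat.sum_antidiagonal_succ', hzero,
    zero_div, mul_zero, mul_zero, zero_add, zero_add, add_mul, qBinomialSum, Finset.mul_sum,
    Finset.mul_sum]
  refine congrArg₂ _ (Finset.sum_congr rfl fun a ha => ?_) (Finset.sum_congr rfl fun a ha => ?_)
  · rw [qNumber_div_qFactorial_succ (hN _ (antidiagonal.fst_le ha))]
    ring
  · rw [qNumber_div_qFactorial_succ (hN _ (antidiagonal.snd_le ha))]
    ring

lemma qFactorial_mul_qBinomialSum (hv : v ≠ 0) (y z : K) {N : ℕ} (hN : qFactorial v N ≠ 0) :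
    qFactorial v N * qBinomialSum v y z N =
      ∏ k ∈ Finset.range N, (y + v ^ (2 * k + 1) * z) := by
  induction N with
  | zero => simp [qFactorial, qBinomialSum]
  | succ N ih =>
    have hne : ∀ k ≤ N, qNumber v (k + 1) ≠ 0 := fun k hk =>
      Finset.prod_ne_zero_iff.mp hN k (Finset.mem_range_succ_iff.mpr hk)
    rw [qFactorial_succ] at hN ⊢
    rw [Finset.prod_range_succ, ← ih (left_ne_zero_of_mul hN), mul_assoc,
      qNumber_mul_qBinomialSum_succ hv y z hne]
    ring

lemma qBinomialSum_neg_mul_self (hv : v ≠ 0) (z : K) {N : ℕ} (hN : qFactorial v N ≠ 0)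
    (hpos : N ≠ 0) : qBinomialSum v (-(v * z)) z N = 0 := by
  refine (mul_eq_zero.mp ?_).resolve_left hN
  rw [qFactorial_mul_qBinomialSum hv _ _ hN]
  exact Finset.prod_eq_zero (Finset.mem_range.mpr (Nat.pos_of_ne_zero hpos)) (by ring)

end QNumber

section PseudoUnitary

/-- `u` preserves the sesquilinear form with Gram element `J`; for `J = 1` this says that `u` is an
isometry. The form may be indefinite, and `u` is not assumed to be invertible. -/
def IsPseudoUnitary {S : Type*} [Mul S] [Star S] (J u : S) : Prop := star u * J * u = J

lemma IsPseudoUnitary.mul {S : Type*} [Semigroup S] [StarMul S] {J u w : S}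
    (hu : IsPseudoUnitary J u) (hw : IsPseudoUnitary J w) : IsPseudoUnitary J (u * w) := by
  rw [IsPseudoUnitary] at hu hw ⊢
  calc star (u * w) * J * (u * w) = star w * (star u * J * u) * w := by
        simp only [star_mul, mul_assoc]
    _ = J := by rw [hu, hw]

/-- The permutation matrix of `k ↦ -k` on `ℤ/p`. -/
abbrev negPermMatrix (p : ℕ) (R : Type*) [Zero R] [One R] : Matrix (ZMod p) (ZMod p) R :=
  (Equiv.neg (ZMod p)).permMatrix R

variable {p : ℕ} {R : Type*} [Semiring R]

lemma negPermMatrix_apply (i j : ZMod p) : negPermMatrix p R i j = if i + j = 0 then 1 else 0 := by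
  refine (congrFun (PEquiv.toMatrix_toPEquiv_apply (Equiv.neg _) i) j).trans ?_
  rw [Equiv.neg_apply, Pi.single_apply, add_comm]
  exact if_congr eq_neg_iff_add_eq_zero rfl rfl

variable [NeZero p]

lemma negPermMatrix_mul_mul_negPermMatrix_apply (M : Matrix (ZMod p) (ZMod p) R) (i j : ZMod p) :
    (negPermMatrix p R * M * negPermMatrix p R) i j = M (-i) (-j) := by
  simp [PEquiv.toMatrix_toPEquiv_mul, PEquiv.mul_toMatrix_toPEquiv]

variable [StarRing R]

lemma star_mul_negPermMatrix_mul_apply (M : Matrix (ZMod p) (ZMod p) R) (i j : ZMod p) :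
    (star M * negPermMatrix p R * M) i j = ∑ k, star (M k i) * M (-k) j := by
  rw [mul_assoc, PEquiv.toMatrix_toPEquiv_mul]
  rfl

lemma isPseudoUnitary_negPermMatrix : IsPseudoUnitary (negPermMatrix p R) (negPermMatrix p R) := by
  rw [IsPseudoUnitary, Matrix.star_eq_conjTranspose, Matrix.conjTranspose_permMatrix,
    ← Matrix.permMatrix_mul, mul_inv_cancel, Matrix.permMatrix_one, one_mul]

lemma isPseudoUnitary_diagonal_pow_val {x : R} (hx : x ^ p = 1) (hstar : IsSelfAdjoint x) :
    IsPseudoUnitary (negPermMatrix p R) (Matrix.diagonal fun n : ZMod p => x ^ n.val) := by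
  ext i j
  rw [Matrix.star_eq_conjTranspose, Matrix.diagonal_conjTranspose, Matrix.mul_diagonal,
    Matrix.diagonal_mul, negPermMatrix_apply]
  split_ifs with h
  · have hdvd : p ∣ i.val + j.val := by
      rw [← ZMod.natCast_eq_zero_iff]
      simpa using h
    obtain ⟨c, hc⟩ := hdvd
    rw [mul_one, Pi.star_apply, star_pow, hstar.star_eq, ← pow_add,
      hc, pow_mul, hx, one_pow]
  · rw [mul_zero, zero_mul]

end PseudoUnitary

section ZModSums

variable {p : ℕ} [NeZero p] {M : Type*} [AddCommMonoid M]

lemma sum_zmod_val (f : ℕ → M) : ∑ x : ZMod p, f x.val = ∑ i ∈ Finset.range p, f i := by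
  cases p with
  | zero => exact absurd rfl (NeZero.ne 0)
  | succ n => exact Fin.sum_univ_eq_sum_range f (n + 1)

lemma sum_zmod_val_neg (f : ℕ → ℕ → M) :
    ∑ k : ZMod p, f k.val (-k).val = f 0 0 + ∑ k ∈ Finset.Icc 1 (p - 1), f k (p - k) := by
  have hneg (k : ZMod p) : f k.val (-k).val = f k.val (if k.val = 0 then 0 else p - k.val) := by
    simp only [ZMod.neg_val, ZMod.val_eq_zero]
  have hIcc : Finset.Ico 1 p = Finset.Icc 1 (p - 1) := by
    ext k
    simp only [Finset.mem_Ico, Finset.mem_Icc]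
    have := NeZero.pos p
    omega
  rw [Finset.sum_congr rfl fun k _ => hneg k,
    sum_zmod_val fun i => f i (if i = 0 then 0 else p - i),
    Finset.sum_range_eq_add_Ico _ (NeZero.pos p), if_pos rfl, hIcc]
  refine congrArg _ (Finset.sum_congr rfl fun k hk => ?_)
  rw [if_neg (Nat.one_le_iff_ne_zero.mp (Finset.mem_Icc.mp hk).1)]

lemma sum_zmod_val_val_add (r : ZMod p) (f : ℕ → ℕ → M) :
    ∑ x : ZMod p, f x.val (x + r).val =
      ∑ k ∈ Finset.range (p - r.val), f k (k + r.val) +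
        ∑ k ∈ Finset.range r.val, f (p - r.val + k) k := by
  have hr := r.val_lt
  simp only [ZMod.val_add]
  rw [sum_zmod_val fun i => f i ((i + r.val) % p),
    ← Finset.sum_range_add_sum_Ico _ (Nat.sub_le p r.val), Finset.sum_Ico_eq_sum_range,
    Nat.sub_sub_self hr.le]
  refine congrArg₂ _ (Finset.sum_congr rfl fun k hk => ?_) (Finset.sum_congr rfl fun k hk => ?_)
  · rw [Nat.mod_eq_of_lt (Nat.add_lt_of_lt_sub (Finset.mem_range.mp hk))]
  · have hk := Finset.mem_range.mp hk
    rw [show p - r.val + k + r.val = k + p by omega, Nat.add_mod_right,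
      Nat.mod_eq_of_lt (hk.trans hr)]

lemma sum_zmod_val_sub_val {f : ℕ → ℕ → M} (hf : ∀ i j, p ≤ i + j → f i j = 0) (N : ZMod p) :
    ∑ j : ZMod p, f (N - j).val j.val = ∑ a ∈ antidiagonal N.val, f a.1 a.2 := by
  symm
  have hlt {a : ℕ × ℕ} (ha : a ∈ antidiagonal N.val) : a.2 < p :=
    (antidiagonal.snd_le ha).trans_lt N.val_lt
  refine Finset.sum_of_injOn (fun a => (a.2 : ZMod p)) ?_ (fun _ _ => Finset.mem_univ _) ?_ ?_
  · intro a ha b hb hab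
    have hval := congrArg ZMod.val hab
    rw [ZMod.val_cast_of_lt (hlt ha), ZMod.val_cast_of_lt (hlt hb)] at hval
    exact (Finset.HasAntidiagonal.antidiagonal_congr' ha hb).mpr hval
  · intro j _ hj
    refine hf _ _ (not_lt.mp fun hlt => hj ⟨((N - j).val, j.val), ?_, ZMod.natCast_zmod_val j⟩)
    rw [Finset.mem_coe, mem_antidiagonal, ← ZMod.val_add_of_lt hlt, sub_add_cancel]
  · intro a ha
    have hval : (a.2 : ZMod p).val = a.2 := ZMod.val_cast_of_lt (hlt ha)
    rw [ZMod.val_sub (hval.trans_le (antidiagonal.snd_le ha)), hval]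
    rw [← mem_antidiagonal.mp ha, Nat.add_sub_cancel]

end ZModSums

section QExpMatrix

lemma addChar_one_pow {G M : Type*} [AddMonoidWithOne G] [Monoid M] (χ : AddChar G M) (k : ℕ) :
    χ 1 ^ k = χ k := by
  rw [← AddChar.map_nsmul_eq_pow, nsmul_one]

variable {p : ℕ} [NeZero p]

/-- The matrix of a truncated `q`-exponential: for `a ≡ m - n` with `0 ≤ a < p`, its `(m, n)` entry
is `χ (-a n) x ^ a / [a]!`, where the `q`-factorial is taken at the `p`-th root of unity `χ 1`. A
power of `χ 1` occurs as a value of the character `χ` to make it periodic in `m` and `n`. -/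
def qExpMatrix {K R : Type*} [Field K] [Semiring R] [Algebra K R] (χ : AddChar (ZMod p) K) (x : R) :
    Matrix (ZMod p) (ZMod p) R :=
  .of fun m n => (χ (-((m - n) * n)) / qFactorial (χ 1) (m - n).val) • x ^ (m - n).val

lemma sum_zmod_smul_pow_eq_ite {K R : Type*} [Field K] [Semiring R] [Algebra K R] {v : K} {x : R}
    (hp : Odd p) (hv : IsPrimitiveRoot v p) (hx : x ^ p = 0) (N : ZMod p) :
    ∑ j : ZMod p, (v ^ (j.val * N.val) * (-v) ^ (N - j).val /
      (qFactorial v (N - j).val * qFactorial v j.val)) • x ^ ((N - j).val + j.val) =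
        if N = 0 then 1 else 0 := by
  have hsum : ∑ j : ZMod p, (v ^ (j.val * N.val) * (-v) ^ (N - j).val /
      (qFactorial v (N - j).val * qFactorial v j.val)) • x ^ ((N - j).val + j.val) =
        qBinomialSum v (-(v * 1)) 1 N.val • x ^ N.val := by
    rw [sum_zmod_val_sub_val (f := fun i j => (v ^ (j * N.val) * (-v) ^ i /
      (qFactorial v i * qFactorial v j)) • x ^ (i + j)) fun i j hij => by
        rw [pow_eq_zero_of_le hij hx, smul_zero], qBinomialSum, Finset.sum_smul]
    refine Finset.sum_congr rfl fun a ha => ?_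
    rw [mem_antidiagonal.mp ha, mul_one, one_pow, mul_one]
  rw [hsum]
  split_ifs with hN
  · simp [hN, qBinomialSum, qFactorial]
  · rw [qBinomialSum_neg_mul_self (hv.ne_zero (NeZero.ne p)) 1
      (qFactorial_ne_zero hv hp N.val_lt) ((ZMod.val_ne_zero N).mpr hN), zero_smul]

variable {R : Type*} [Semiring R] [StarRing R] [Algebra ℂ R] [StarModule ℂ R]

lemma star_addChar_apply (χ : AddChar (ZMod p) ℂ) (a : ZMod p) : star (χ a) = χ (-a) :=
  (AddChar.map_neg_eq_conj χ a).symm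

lemma star_qExpMatrix_apply_mul (χ : AddChar (ZMod p) ℂ) {x : R} (hstar : star x = (-χ 1) • x)
    (s t j : ZMod p) :
    star (qExpMatrix χ x (-(t + j)) s) * qExpMatrix χ x (t + j) t =
      χ (-(s * (s + t))) • ((χ 1 ^ (j.val * (-(s + t)).val) * (-χ 1) ^ (-(s + t) - j).val /
        (qFactorial (χ 1) (-(s + t) - j).val * qFactorial (χ 1) j.val)) •
          x ^ ((-(s + t) - j).val + j.val)) := by
  have hchar : χ ((-(s + t) - j) * s) * χ (-(j * t)) =
      χ (-(s * (s + t))) * χ 1 ^ (j.val * (-(s + t)).val) := by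
    rw [addChar_one_pow, ← AddChar.map_add_eq_mul, ← AddChar.map_add_eq_mul]
    push_cast
    simp only [ZMod.natCast_val, ZMod.cast_id', id_eq]
    congr 1
    ring
  have hfact (k : ℕ) : star (qFactorial (χ 1) k) = qFactorial (χ 1) k := by
    rw [star_qFactorial, star_addChar_apply, AddChar.map_neg_eq_inv, qFactorial_inv]
  rw [qExpMatrix, Matrix.of_apply, Matrix.of_apply, add_sub_cancel_left,
    show -(t + j) - s = -(s + t) - j by ring, star_smul, star_pow, hstar, smul_pow,
    star_div₀, hfact, star_addChar_apply, neg_neg, smul_smul, smul_mul_smul_comm, ← pow_add,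
    smul_smul]
  congr 1
  linear_combination ((-χ 1) ^ (-(s + t) - j).val / (qFactorial (χ 1) (-(s + t) - j).val *
    qFactorial (χ 1) j.val)) * hchar

theorem isPseudoUnitary_qExpMatrix (hp : Odd p) {χ : AddChar (ZMod p) ℂ}
    (hχ : IsPrimitiveRoot (χ 1) p) {x : R} (hx : x ^ p = 0) (hstar : star x = (-χ 1) • x) :
    IsPseudoUnitary (negPermMatrix p R) (qExpMatrix χ x) := by
  ext s t
  rw [star_mul_negPermMatrix_mul_apply, negPermMatrix_apply,
    ← ((Equiv.addLeft t).trans (Equiv.neg _)).sum_comp]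
  simp only [Equiv.trans_apply, Equiv.coe_addLeft, Equiv.neg_apply, neg_neg,
    star_qExpMatrix_apply_mul χ hstar]
  rw [← Finset.smul_sum, sum_zmod_smul_pow_eq_ite hp hχ hx]
  simp only [neg_eq_zero]
  split_ifs with h
  · rw [h, mul_zero, neg_zero, AddChar.map_zero_eq_one, one_smul]
  · rw [smul_zero]

end QExpMatrix

section NormalOrdering

variable {K R : Type*} [CommSemiring K] [Semiring R] [Algebra K R] {a b : R}

lemma pow_mul_pow_of_mul_eq_smul {c : K} (h : b * a = c • (a * b)) (n m : ℕ) :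
    b ^ n * a ^ m = c ^ (n * m) • (a ^ m * b ^ n) := by
  have hleft : b ^ n * a = (c ^ n • a) * b ^ n := by
    induction n with
    | zero => simp
    | succ n ih =>
      rw [pow_succ, mul_assoc, h, mul_smul_comm, ← mul_assoc, ih, smul_mul_assoc, smul_mul_assoc,
        smul_smul, mul_assoc, pow_succ', smul_mul_assoc]
  rw [(SemiconjBy.pow_right hleft m).eq, smul_pow, ← pow_mul, smul_mul_assoc]

lemma smul_mul_pow_of_mul_eq_sq_smul {c : K} (h : b * a = c ^ 2 • (a * b)) (k : ℕ) :
    (c • (a * b)) ^ k = c ^ (k ^ 2) • (a ^ k * b ^ k) := by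
  induction k with
  | zero => simp
  | succ k ih =>
    calc (c • (a * b)) ^ (k + 1) = (c ^ (k ^ 2) * c) • (a ^ k * (b ^ k * a ^ 1) * b) := by
          rw [pow_succ, ih, smul_mul_smul_comm, pow_one]
          simp only [mul_assoc]
      _ = (c ^ (k ^ 2) * c * (c ^ 2) ^ (k * 1)) • (a ^ k * a * (b ^ k * b)) := by
          rw [pow_mul_pow_of_mul_eq_smul h, mul_smul_comm, smul_mul_assoc, smul_smul, pow_one]
          simp only [mul_assoc]
      _ = c ^ ((k + 1) ^ 2) • (a ^ (k + 1) * b ^ (k + 1)) := by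
          rw [← pow_succ, ← pow_succ, ← pow_succ, ← pow_mul, ← pow_add]
          congr 2
          ring

end NormalOrdering

section Parameters

lemma q_ne_zero (p : ℕ) : q p ≠ 0 := Complex.exp_ne_zero _

lemma qh_ne_zero (p : ℕ) : qh p ≠ 0 := Complex.exp_ne_zero _

lemma qh_sq (p : ℕ) : qh p ^ 2 = q p := by
  rw [qh, q, ← Complex.exp_nat_mul]
  congr 1
  push_cast
  ring

lemma star_qh (p : ℕ) : star (qh p) = (qh p)⁻¹ := by
  rw [qh, ← starRingEnd_apply, ← Complex.exp_conj, ← Complex.exp_neg]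
  simp [neg_div]

lemma stdAddChar_one (p : ℕ) [NeZero p] : (ZMod.stdAddChar (1 : ZMod p) : ℂ) = q p := by
  simpa [q] using ZMod.stdAddChar_coe (N := p) 1

lemma inv_stdAddChar_one (p : ℕ) [NeZero p] :
    (ZMod.stdAddChar⁻¹ : AddChar (ZMod p) ℂ) 1 = (q p)⁻¹ := by
  rw [AddChar.inv_apply', stdAddChar_one]

lemma isPrimitiveRoot_stdAddChar_one (p : ℕ) [NeZero p] :
    IsPrimitiveRoot (ZMod.stdAddChar (1 : ZMod p) : ℂ) p := by
  rw [stdAddChar_one]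
  exact Complex.isPrimitiveRoot_exp p (NeZero.ne p)

lemma q_pow_eq_stdAddChar (p k : ℕ) [NeZero p] : q p ^ k = ZMod.stdAddChar (k : ZMod p) := by
  rw [← stdAddChar_one, addChar_one_pow]

lemma inv_q_pow_eq_stdAddChar (p k : ℕ) [NeZero p] :
    (q p)⁻¹ ^ k = ZMod.stdAddChar (-(k : ZMod p)) := by
  rw [AddChar.map_neg_eq_inv, ← q_pow_eq_stdAddChar, inv_pow]

lemma qfact_eq_qFactorial (p k : ℕ) : qfact p k = qFactorial (q p) k := rfl

end Parameters

section Generators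

variable (p : ℕ)

lemma ηm_mul_ηp : ηm p * ηp p = (q p ^ 2) • (ηp p * ηm p) := by
  simpa [ηm, ηp] using RingQuot.mkAlgHom_rel ℂ (ERel.commEta (p := p))

lemma ηp_mul_dl : ηp p * dl p = (q p ^ 2) • (dl p * ηp p) := by
  simpa [dl, ηp] using RingQuot.mkAlgHom_rel ℂ (ERel.commEpD (p := p))

lemma ηm_mul_dl : ηm p * dl p = (q p ^ 2) • (dl p * ηm p) := by
  simpa [dl, ηm] using RingQuot.mkAlgHom_rel ℂ (ERel.commEmD (p := p))

lemma dl_pow : dl p ^ p = 1 := by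
  simpa [dl] using RingQuot.mkAlgHom_rel ℂ (ERel.deltaPow (p := p))

lemma ηp_pow : ηp p ^ p = 0 := by
  simpa [ηp] using RingQuot.mkAlgHom_rel ℂ (ERel.epPow (p := p))

lemma ηm_pow : ηm p ^ p = 0 := by
  simpa [ηm] using RingQuot.mkAlgHom_rel ℂ (ERel.emPow (p := p))

/-- The rescaled generator `-i q^{-1/2} λ₊ η₊` occurring in `dmat`. -/
def scaledηp (lp : ℂ) : A p := (-Complex.I * (qh p)⁻¹ * lp) • ηp p

/-- The rescaled generator `-i q^{1/2} λ₋ η₋` occurring in `dmat`. -/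
def scaledηm (lm : ℂ) : A p := (-Complex.I * qh p * lm) • ηm p

lemma scaledηp_pow (lp : ℂ) : scaledηp p lp ^ p = 0 := by
  rw [scaledηp, smul_pow, ηp_pow, smul_zero]

lemma scaledηm_pow (lm : ℂ) : scaledηm p lm ^ p = 0 := by
  rw [scaledηm, smul_pow, ηm_pow, smul_zero]

lemma scaledηm_mul_scaledηp (lp lm : ℂ) :
    scaledηm p lm * scaledηp p lp = (q p ^ 2) • (scaledηp p lp * scaledηm p lm) := by
  simp only [scaledηm, scaledηp, smul_mul_smul_comm, ηm_mul_ηp, smul_smul]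
  congr 1
  ring

lemma neg_mul_smul_xi (lp lm : ℂ) :
    (-(lp * lm)) • xi p = q p • (scaledηp p lp * scaledηm p lm) := by
  have hqh := qh_ne_zero p
  rw [xi, scaledηp, scaledηm, smul_mul_smul_comm, smul_smul, smul_smul]
  congr 1
  field_simp
  linear_combination -(q p * lp * lm) * Complex.I_sq

lemma dl_mul_xi : dl p * xi p = (q p)⁻¹ ^ 4 • (xi p * dl p) := by
  have hxi : xi p * dl p = q p ^ 4 • (dl p * xi p) := by
    simp only [xi, smul_mul_assoc, mul_smul_comm, mul_assoc, ηm_mul_dl]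
    simp only [← mul_assoc, ηp_mul_dl, smul_mul_assoc, smul_smul]
    congr 1
    ring
  rw [hxi, smul_smul, ← mul_pow, inv_mul_cancel₀ (q_ne_zero p), one_pow, one_smul]

variable {p} [StarRing (A p)] [StarModule ℂ (A p)]

lemma star_scaledηp (hη : IsSelfAdjoint (ηp p)) (lp : ℝ) :
    star (scaledηp p lp) = (-q p) • scaledηp p lp := by
  have hqh := qh_ne_zero p
  rw [scaledηp, star_smul, hη.star_eq, smul_smul, star_mul', star_mul', star_neg, star_inv₀,
    star_qh, Complex.star_def, Complex.conj_I, Complex.conj_ofReal, ← qh_sq]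
  congr 1
  field_simp

lemma star_scaledηm (hη : IsSelfAdjoint (ηm p)) (lm : ℝ) :
    star (scaledηm p lm) = (-(q p)⁻¹) • scaledηm p lm := by
  have hqh := qh_ne_zero p
  rw [scaledηm, star_smul, hη.star_eq, smul_smul, star_mul', star_mul', star_neg, star_qh,
    Complex.star_def, Complex.conj_I, Complex.conj_ofReal, ← qh_sq]
  congr 1
  field_simp

end Generators

section MatrixElements

variable {p : ℕ}

/-- As `r ≡ n - m` mod `p`, this is one formula for the three cases in the definition of `dmat`. -/
lemma dmat_eq_of_add_eq {m n r : ℕ} (lp lm : ℂ) (hm : m < p) (hn : n < p) (hr : r < p)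
    (hmr : m + r = n ∨ m + r = n + p) :
    dmat p lp lm m n =
      ∑ k ∈ Finset.range (p - r), ((q p)⁻¹ ^ (k * (m + n)) / (qfact p k * qfact p (k + r))) •
        ((q p • (scaledηp p lp * scaledηm p lm)) ^ k * ((q p)⁻¹ ^ n • scaledηm p lm) ^ r *
          dl p ^ n) +
      ∑ k ∈ Finset.range r, (q p ^ (k * (m + n)) / (qfact p k * qfact p (k + (p - r)))) •
        (((q p)⁻¹ ^ n • scaledηp p lp) ^ (p - r) * dl p ^ n *
          (q p • (scaledηp p lp * scaledηm p lm)) ^ k) := by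
  have hscaledp :
      (-Complex.I * (qh p)⁻¹ * (q p)⁻¹ ^ n * lp) • ηp p = (q p)⁻¹ ^ n • scaledηp p lp := by
    rw [scaledηp, smul_smul]
    congr 1
    ring
  have hscaledm :
      (-Complex.I * qh p * (q p)⁻¹ ^ n * lm) • ηm p = (q p)⁻¹ ^ n • scaledηm p lm := by
    rw [scaledηm, smul_smul]
    congr 1
    ring
  have hxi (k : ℕ) (c d : ℂ) : ((-(lp * lm)) ^ k * c / d) • xi p ^ k =
      (c / d) • (q p • (scaledηp p lp * scaledηm p lm)) ^ k := by
    rw [← neg_mul_smul_xi, smul_pow, smul_smul]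
    congr 1
    ring
  simp only [dmat, hscaledp, hscaledm, hxi, Finset.sum_mul, Finset.mul_sum,
    smul_mul_assoc, mul_smul_comm]
  split_ifs with hmn hnm
  · obtain rfl : r = n - m := by omega
    refine congrArg₂ _ ?_ (Finset.sum_congr rfl fun k _ => ?_)
    · refine Finset.sum_congr (by congr 1; omega) fun k _ => ?_
      rw [show k + n - m = k + (n - m) by omega]
    · rw [show p + m - n = p - (n - m) by omega,
        show k + p + m - n = k + (p - (n - m)) by omega]
  · obtain rfl : r = p + n - m := by omega
    refine congrArg₂ _ ?_ ?_
    · refine Finset.sum_congr (by congr 1; omega) fun k _ => ?_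
      rw [show k + p + n - m = k + (p + n - m) by omega]
    · refine Finset.sum_congr (by congr 1; omega) fun k _ => ?_
      rw [show m - n = p - (p + n - m) by omega,
        show k + m - n = k + (p - (p + n - m)) by omega]
  · obtain rfl : r = 0 := by omega
    obtain rfl : m = n := by omega
    rw [Finset.range_zero, Finset.sum_empty, add_zero, Nat.sub_zero]
    refine Finset.sum_congr rfl fun k _ => ?_
    rw [pow_zero, mul_one, add_zero, sq, ← two_mul m, mul_left_comm k 2 m, ← mul_assoc 2]

variable [NeZero p]

/-- The summand `η₊^a η₋^b δ^n` of `d_{mn}`, where `a - b ≡ m - n` mod `p`, with its coefficient.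
The power of `q` is a value of `ZMod.stdAddChar`, so that its exponent is computed in `ZMod p`. -/
def dmatTerm (lp lm : ℂ) (n : ZMod p) (a b : ℕ) : A p :=
  (ZMod.stdAddChar ((a * b - n * (a + b) : ZMod p)) / (qfact p a * qfact p b)) •
    (scaledηp p lp ^ a * scaledηm p lm ^ b * dl p ^ n.val)

lemma xi_pow_mul_ηm_pow_eq_dmatTerm (lp lm : ℂ) {m n : ZMod p} {r : ℕ}
    (hr : (r : ZMod p) = n - m) (k : ℕ) :
    ((q p)⁻¹ ^ (k * (m.val + n.val)) / (qfact p k * qfact p (k + r))) •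
        ((q p • (scaledηp p lp * scaledηm p lm)) ^ k * ((q p)⁻¹ ^ n.val • scaledηm p lm) ^ r *
          dl p ^ n.val) = dmatTerm lp lm n k (k + r) := by
  have hchar : (q p)⁻¹ ^ (k * (m.val + n.val)) * (q p ^ (k ^ 2) * ((q p)⁻¹ ^ n.val) ^ r) =
      ZMod.stdAddChar ((k * (k + r : ℕ) - n * (k + (k + r : ℕ)) : ZMod p)) := by
    rw [← pow_mul, q_pow_eq_stdAddChar, inv_q_pow_eq_stdAddChar, inv_q_pow_eq_stdAddChar,
      ← AddChar.map_add_eq_mul, ← AddChar.map_add_eq_mul]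
    push_cast
    simp only [ZMod.natCast_val, ZMod.cast_id', id_eq, hr]
    congr 1
    ring
  rw [smul_mul_pow_of_mul_eq_sq_smul (scaledηm_mul_scaledηp p lp lm), smul_pow, dmatTerm, ← hchar,
    smul_mul_smul_comm, mul_assoc _ (_ ^ k) (_ ^ r), ← pow_add, smul_mul_assoc, smul_smul,
    div_mul_eq_mul_div]

lemma ηp_pow_mul_xi_pow_eq_dmatTerm (lp lm : ℂ) {m n : ZMod p} {t : ℕ}
    (ht : (t : ZMod p) = m - n) (k : ℕ) :
    (q p ^ (k * (m.val + n.val)) / (qfact p k * qfact p (k + t))) •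
        (((q p)⁻¹ ^ n.val • scaledηp p lp) ^ t * dl p ^ n.val *
          (q p • (scaledηp p lp * scaledηm p lm)) ^ k) = dmatTerm lp lm n (t + k) k := by
  have hchar : q p ^ (k * (m.val + n.val)) *
        (((q p)⁻¹ ^ n.val) ^ t * ((q p)⁻¹ ^ 4) ^ (n.val * k) * q p ^ (k ^ 2)) =
      ZMod.stdAddChar (((t + k : ℕ) * k - n * ((t + k : ℕ) + k) : ZMod p)) := by
    rw [← pow_mul, ← pow_mul, q_pow_eq_stdAddChar, inv_q_pow_eq_stdAddChar,
      inv_q_pow_eq_stdAddChar, q_pow_eq_stdAddChar, ← AddChar.map_add_eq_mul,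
      ← AddChar.map_add_eq_mul, ← AddChar.map_add_eq_mul]
    push_cast
    simp only [ZMod.natCast_val, ZMod.cast_id', id_eq, ht]
    congr 1
    ring
  have hcomm : dl p ^ n.val * (q p • (scaledηp p lp * scaledηm p lm)) ^ k =
      ((q p)⁻¹ ^ 4) ^ (n.val * k) •
        ((q p • (scaledηp p lp * scaledηm p lm)) ^ k * dl p ^ n.val) := by
    rw [← neg_mul_smul_xi, smul_pow, mul_smul_comm, pow_mul_pow_of_mul_eq_smul (dl_mul_xi p),
      smul_mul_assoc, smul_comm]
  rw [mul_assoc, hcomm, smul_mul_pow_of_mul_eq_sq_smul (scaledηm_mul_scaledηp p lp lm), smul_pow,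
    dmatTerm, ← hchar]
  simp only [smul_mul_assoc, mul_smul_comm, smul_smul]
  rw [pow_add, add_comm k t]
  simp only [mul_assoc]
  congr 1
  ring

lemma dmat_eq_sum_dmatTerm (lp lm : ℂ) (m n : ZMod p) :
    dmat p lp lm m.val n.val = ∑ s : ZMod p, dmatTerm lp lm n (m - s).val (n - s).val := by
  have hr := (n - m).val_lt
  have hmr : m.val + (n - m).val = n.val ∨ m.val + (n - m).val = n.val + p := by
    rcases lt_or_ge (m.val + (n - m).val) p with h | h
    · exact .inl (by rw [← ZMod.val_add_of_lt h, add_sub_cancel])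
    · exact .inr (by rw [ZMod.val_add_val_of_le h, add_sub_cancel])
  have hsub : ((p - (n - m).val : ℕ) : ZMod p) = m - n := by
    rw [Nat.cast_sub hr.le, ZMod.natCast_self, ZMod.natCast_zmod_val]
    ring
  rw [dmat_eq_of_add_eq lp lm m.val_lt n.val_lt hr hmr, ← (Equiv.subLeft m).sum_comp]
  simp only [xi_pow_mul_ηm_pow_eq_dmatTerm lp lm (ZMod.natCast_zmod_val (n - m)),
    ηp_pow_mul_xi_pow_eq_dmatTerm lp lm hsub, Equiv.subLeft_apply, sub_sub_cancel]
  rw [← sum_zmod_val_val_add]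
  refine Finset.sum_congr rfl fun x _ => ?_
  rw [show n - (m - x) = x + (n - m) by ring]

/-- The matrix `(d_{mn}(λ))` indexed by residues mod `p`. -/
def dmatMatrix (lp lm : ℂ) : Matrix (ZMod p) (ZMod p) (A p) :=
  .of fun m n => dmat p lp lm m.val n.val

lemma dmatTerm_eq_qExpMatrix_mul (lp lm : ℂ) (m n s : ZMod p) :
    dmatTerm lp lm n (m - s).val (n - s).val =
      qExpMatrix ZMod.stdAddChar (scaledηp p lp) m s *
        qExpMatrix ZMod.stdAddChar⁻¹ (scaledηm p lm) (-s) (-n) * dl p ^ n.val := by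
  have hchar : (ZMod.stdAddChar ((m - s) * (n - s) - n * ((m - s) + (n - s))) : ℂ) =
      ZMod.stdAddChar (-((m - s) * s)) * ZMod.stdAddChar⁻¹ (-((n - s) * -n)) := by
    rw [AddChar.inv_apply, ← AddChar.map_add_eq_mul]
    congr 1
    ring
  rw [dmatTerm, qExpMatrix, qExpMatrix, Matrix.of_apply, Matrix.of_apply,
    show -s - -n = n - s by ring, stdAddChar_one, inv_stdAddChar_one, qFactorial_inv,
    qfact_eq_qFactorial, qfact_eq_qFactorial, ZMod.natCast_zmod_val, ZMod.natCast_zmod_val, hchar,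
    smul_mul_smul_comm, smul_mul_assoc, div_mul_div_comm]

lemma dmatMatrix_eq_mul (lp lm : ℂ) :
    (dmatMatrix lp lm : Matrix (ZMod p) (ZMod p) (A p)) =
      qExpMatrix ZMod.stdAddChar (scaledηp p lp) *
        (negPermMatrix p (A p) * qExpMatrix ZMod.stdAddChar⁻¹ (scaledηm p lm) *
          negPermMatrix p (A p)) *
        Matrix.diagonal fun n => dl p ^ n.val := by
  ext m n
  rw [dmatMatrix, Matrix.of_apply, dmat_eq_sum_dmatTerm, Matrix.mul_diagonal, Matrix.mul_apply,
    Finset.sum_mul]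
  refine Finset.sum_congr rfl fun s _ => ?_
  rw [negPermMatrix_mul_mul_negPermMatrix_apply, dmatTerm_eq_qExpMatrix_mul]

variable [StarRing (A p)] [StarModule ℂ (A p)]

theorem isPseudoUnitary_dmatMatrix (hp : Odd p) (hηp : IsSelfAdjoint (ηp p))
    (hηm : IsSelfAdjoint (ηm p)) (hdl : IsSelfAdjoint (dl p)) (lp lm : ℝ) :
    IsPseudoUnitary (negPermMatrix p (A p)) (dmatMatrix lp lm) := by
  have hχ := isPrimitiveRoot_stdAddChar_one p
  have hplus : IsPseudoUnitary (negPermMatrix p (A p))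
      (qExpMatrix ZMod.stdAddChar (scaledηp p lp)) :=
    isPseudoUnitary_qExpMatrix hp hχ (scaledηp_pow p lp)
      (by rw [stdAddChar_one, star_scaledηp hηp])
  have hminus : IsPseudoUnitary (negPermMatrix p (A p))
      (qExpMatrix ZMod.stdAddChar⁻¹ (scaledηm p lm)) :=
    isPseudoUnitary_qExpMatrix hp (by rw [AddChar.inv_apply']; exact hχ.inv) (scaledηm_pow p lm)
      (by rw [inv_stdAddChar_one, star_scaledηm hηm])
  have hneg : IsPseudoUnitary (negPermMatrix p (A p)) (negPermMatrix p (A p)) :=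
    isPseudoUnitary_negPermMatrix
  rw [dmatMatrix_eq_mul]
  exact (hplus.mul ((hneg.mul hminus).mul hneg)).mul
    (isPseudoUnitary_diagonal_pow_val (dl_pow p) hdl)

end MatrixElements

lemma natCast_zmod_add_eq_zero_iff {p m n : ℕ} (hm : m < p) (hn : n < p) :
    (m : ZMod p) + n = 0 ↔ m + n = 0 ∨ m + n = p := by
  rw [← Nat.cast_add, ZMod.natCast_eq_zero_iff]
  constructor
  · rintro ⟨c, hc⟩
    have hc2 : c < 2 := by
      by_contra! h
      nlinarith
    interval_cases c <;> omega
  · rintro (h | h) <;> simp [h]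

/-- Pseudo-unitarity of the matrix elements `D^λ_{mn}` for real `λ₊, λ₋`:
`(d_{0m})*·d_{0n} + Σ_{k=1}^{p−1} (d_{km})*·d_{p−k,n} = (δ_{m+n,0} + δ_{m+n,p})·1_A`. -/
theorem statement10 (p : ℕ) (hp : Odd p) (hp3 : 3 ≤ p) (lp lm : ℝ)
    (st : A p → A p)
    (hstAdd : ∀ x y : A p, st (x + y) = st x + st y)
    (hstSmul : ∀ (c : ℂ) (x : A p), st (c • x) = (starRingEnd ℂ) c • st x)
    (hstMul : ∀ x y : A p, st (x * y) = st y * st x)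
    (hstInv : ∀ x : A p, st (st x) = x)
    (hst1 : st (ηp p) = ηp p) (hst2 : st (ηm p) = ηm p) (hst3 : st (dl p) = dl p) :
    ∀ m n : ℕ, m < p → n < p →
      st (dmat p (lp : ℂ) (lm : ℂ) 0 m) * dmat p (lp : ℂ) (lm : ℂ) 0 n +
        ∑ k ∈ Finset.Icc 1 (p - 1),
          st (dmat p (lp : ℂ) (lm : ℂ) k m) * dmat p (lp : ℂ) (lm : ℂ) (p - k) n =
      (((if m + n = 0 then 1 else 0) + (if m + n = p then 1 else 0) : ℂ)) • (1 : A p) := by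
  intro m n hm hn
  have : NeZero p := ⟨by omega⟩
  let : StarRing (A p) :=
    { star := st, star_involutive := hstInv, star_mul := hstMul, star_add := hstAdd }
  let : StarModule ℂ (A p) := ⟨hstSmul⟩
  have hentry := congrFun₂ (isPseudoUnitary_dmatMatrix hp hst1 hst2 hst3 lp lm) (m : ZMod p) n
  simp only [star_mul_negPermMatrix_mul_apply, negPermMatrix_apply, dmatMatrix, Matrix.of_apply,
    ZMod.val_cast_of_lt hm, ZMod.val_cast_of_lt hn, natCast_zmod_add_eq_zero_iff hm hn] at hentry
  rw [sum_zmod_val_neg fun i j => star (dmat p lp lm i m) * dmat p lp lm j n] at hentry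
  refine hentry.trans ?_
  by_cases h : m + n = 0
  · simp [h, hp.pos.ne]
  · simp only [h, false_or, if_false, zero_add, ite_smul, one_smul, zero_smul]
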